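/- Let n ≥ 3 be an integer, φ₀ > 0, and let φ : I → ℝ be a smooth positive function on an open interval I containing 0 satisfying φ''(s) = (n-1)(1+φ'(s)²)/φ(s), φ(0) = φ₀, φ'(0) = 0. Define the radial Laplacian Δf(s) = (1+φ'(s)²)^{-1/2}·φ(s)^{1-n}·d/ds[(1+φ'(s)²)^{-1/2}·φ(s)^{n-1}·f'(s)], set ψ(s) = (n(n-1))^{1/2}·φ₀^{n-1}·φ(s)^{-n}, and let u(s) = ψ(s)^{(n-2)/n}. Then u > 0 everywhere on I and Δu(s) + ((n-2)/n)·ψ(s)²·u(s) = 0 for all s ∈ I. -/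

import Mathlib

/-!
With `k = n - 1`, the quantity `(1 + φ'²) φ^(-2k)` is conserved along the catenoid equation
`φ'' = k (1 + φ'²) / φ`. At the neck it equals `φ₀^(-2k)`, so `(1 + φ'²)^(-1/2) = (φ₀ / φ)^k`; the
flux in the radial Laplacian then becomes `φ₀^k f'`, and `Δf = (φ₀ / φ)^(2k) f''` for every radial
`f`.

The catenoid equation also gives `(φ^p)'' = p ((p - 1 + k) φ'² + k) φ^(p - 2)`, where `φ'` drops out
exactly when `p = 1 - k = 2 - n`. Since `u` is a constant multiple of `φ^(2 - n)`, both `Δu` and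
`ψ² u` are multiples of `φ^(2 - 3n)`, and it remains to compare constants.
-/

/-- The Laplace–Beltrami operator of the catenoid metric
`g = (1+φ'²)ds² + φ²·g_{S^{n-1}}` acting on rotationally symmetric functions `f = f(s)`:
`Δf = (1+φ'²)^(-1/2)·φ^(1-n)·((1+φ'²)^(-1/2)·φ^(n-1)·f')'`. -/
noncomputable def radialLaplacian (n : ℕ) (φ : ℝ → ℝ) (f : ℝ → ℝ) : ℝ → ℝ :=
  fun s =>
    (1 + (deriv φ s) ^ 2) ^ (-(1 / 2 : ℝ)) * (φ s) ^ ((1 : ℤ) - n) *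
      deriv (fun t =>
        (1 + (deriv φ t) ^ 2) ^ (-(1 / 2 : ℝ)) * (φ t) ^ ((n : ℤ) - 1) * deriv f t) s

/-- `φ` is the profile of a rotationally symmetric hypersurface `(φ(s)ω, s)` satisfying the catenoid
equation with coefficient `k` on `I`; minimal hypersurfaces of `ℝ^(n+1)` correspond to `k = n - 1`.
The derivatives are recorded as `HasDerivAt` facts, so `deriv φ` is never a junk value on `I`. -/
structure IsCatenoidProfile (k : ℝ) (I : Set ℝ) (φ : ℝ → ℝ) : Prop where
  pos : ∀ s ∈ I, 0 < φ s
  hasDerivAt : ∀ s ∈ I, HasDerivAt φ (deriv φ s) s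
  hasDerivAt_deriv : ∀ s ∈ I, HasDerivAt (deriv φ) (k * (1 + deriv φ s ^ 2) / φ s) s

namespace IsCatenoidProfile

variable {k a s : ℝ} {I : Set ℝ} {φ : ℝ → ℝ}

theorem of_contDiffOn (hI : IsOpen I) (hφ : ContDiffOn ℝ 2 φ I) (hpos : ∀ s ∈ I, 0 < φ s)
    (hode : ∀ s ∈ I, deriv (deriv φ) s = k * (1 + deriv φ s ^ 2) / φ s) :
    IsCatenoidProfile k I φ where
  pos := hpos
  hasDerivAt _ hs :=
    ((hφ.differentiableOn two_ne_zero).differentiableAt (hI.mem_nhds hs)).hasDerivAt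
  hasDerivAt_deriv s hs := by
    have hφ' : ContDiffOn ℝ 1 (deriv φ) I := hφ.deriv_of_isOpen hI (by norm_num)
    rw [← hode s hs]
    exact ((hφ'.differentiableOn one_ne_zero).differentiableAt (hI.mem_nhds hs)).hasDerivAt

theorem hasDerivAt_firstIntegral (hφ : IsCatenoidProfile k I φ) (hs : s ∈ I) :
    HasDerivAt (fun t ↦ (1 + deriv φ t ^ 2) * φ t ^ (-(2 * k))) 0 s := by
  have hφs := hφ.pos s hs
  refine ((((hφ.hasDerivAt_deriv s hs).fun_pow 2).const_add 1).mul
    ((hφ.hasDerivAt s hs).rpow_const (p := -(2 * k)) (.inl hφs.ne'))).congr_deriv ?_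
  rw [Real.rpow_sub_one hφs.ne']
  field_simp
  ring

theorem firstIntegral_eq (hφ : IsCatenoidProfile k I φ) (hI : IsOpen I) (hI' : IsPreconnected I)
    (ha : a ∈ I) (hs : s ∈ I) :
    (1 + deriv φ s ^ 2) * φ s ^ (-(2 * k)) = (1 + deriv φ a ^ 2) * φ a ^ (-(2 * k)) :=
  hI.is_const_of_deriv_eq_zero hI'
    (fun _ ht ↦ (hφ.hasDerivAt_firstIntegral ht).differentiableAt.differentiableWithinAt)
    (fun _ ht ↦ (hφ.hasDerivAt_firstIntegral ht).deriv) hs ha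

theorem one_add_deriv_sq (hφ : IsCatenoidProfile k I φ) (hI : IsOpen I) (hI' : IsPreconnected I)
    (ha : a ∈ I) (ha' : deriv φ a = 0) (hs : s ∈ I) :
    1 + deriv φ s ^ 2 = (φ s / φ a) ^ (2 * k) := by
  have hφa := hφ.pos a ha
  have hφs := hφ.pos s hs
  have hconst := hφ.firstIntegral_eq hI hI' ha hs
  rw [ha', Real.rpow_neg hφs.le, Real.rpow_neg hφa.le] at hconst
  rw [Real.div_rpow hφs.le hφa.le]
  field_simp at hconst ⊢
  linarith

theorem one_add_deriv_sq_rpow_neg_half (hφ : IsCatenoidProfile k I φ) (hI : IsOpen I)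
    (hI' : IsPreconnected I) (ha : a ∈ I) (ha' : deriv φ a = 0) (hs : s ∈ I) :
    (1 + deriv φ s ^ 2) ^ (-(1 / 2 : ℝ)) = (φ a / φ s) ^ k := by
  have hφa := hφ.pos a ha
  have hφs := hφ.pos s hs
  rw [hφ.one_add_deriv_sq hI hI' ha ha' hs, ← Real.rpow_mul (by positivity), ← inv_div (φ s),
    Real.inv_rpow (by positivity), ← Real.rpow_neg (by positivity)]
  ring_nf

theorem radialLaplacian_eq {n : ℕ} (hφ : IsCatenoidProfile ((n : ℝ) - 1) I φ) (hI : IsOpen I)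
    (hI' : IsPreconnected I) (ha : a ∈ I) (ha' : deriv φ a = 0) (hs : s ∈ I) (f : ℝ → ℝ) :
    radialLaplacian n φ f s = (φ a / φ s) ^ (2 * ((n : ℝ) - 1)) * deriv (deriv f) s := by
  have hφa := hφ.pos a ha
  have hφs := hφ.pos s hs
  have flux_eq : ∀ t ∈ I, (1 + deriv φ t ^ 2) ^ (-(1 / 2 : ℝ)) * φ t ^ ((n : ℤ) - 1) * deriv f t
      = φ a ^ ((n : ℝ) - 1) * deriv f t := by
    intro t ht
    have hφt := hφ.pos t ht
    rw [hφ.one_add_deriv_sq_rpow_neg_half hI hI' ha ha' ht, ← Real.rpow_intCast,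
      Real.div_rpow hφa.le hφt.le]
    push_cast
    field_simp
  have deriv_flux_eq := (Set.EqOn.eventuallyEq_of_mem flux_eq (hI.mem_nhds hs)).deriv_eq
  rw [radialLaplacian, deriv_flux_eq, deriv_const_mul_field,
    hφ.one_add_deriv_sq_rpow_neg_half hI hI' ha ha' hs, ← Real.rpow_intCast, two_mul,
    Real.rpow_add (by positivity), Real.div_rpow hφa.le hφs.le, ← neg_sub (n : ℤ) 1, Int.cast_neg,
    Real.rpow_neg hφs.le]
  push_cast
  ring

theorem deriv_deriv_rpow (hφ : IsCatenoidProfile k I φ) (hI : IsOpen I) (hs : s ∈ I) (p : ℝ) :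
    deriv (deriv fun t ↦ φ t ^ p) s =
      p * ((p - 1 + k) * deriv φ s ^ 2 + k) * φ s ^ (p - 2) := by
  have hφs := hφ.pos s hs
  have deriv_rpow : Set.EqOn (deriv fun t ↦ φ t ^ p) (fun t ↦ deriv φ t * p * φ t ^ (p - 1)) I :=
    fun t ht ↦ ((hφ.hasDerivAt t ht).rpow_const (.inl (hφ.pos t ht).ne')).deriv
  rw [(deriv_rpow.eventuallyEq_of_mem (hI.mem_nhds hs)).deriv_eq]
  refine ((((hφ.hasDerivAt_deriv s hs).mul_const p).mul
    ((hφ.hasDerivAt s hs).rpow_const (.inl hφs.ne'))).congr_deriv ?_).deriv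
  rw [show p - 1 = p - 2 + 1 by ring, Real.rpow_add_one hφs.ne', add_sub_cancel_right]
  field_simp
  ring

theorem radialLaplacian_const_mul_rpow {n : ℕ} {u : ℝ → ℝ} {C : ℝ}
    (hφ : IsCatenoidProfile ((n : ℝ) - 1) I φ) (hI : IsOpen I) (hI' : IsPreconnected I)
    (ha : a ∈ I) (ha' : deriv φ a = 0) (hs : s ∈ I)
    (hu : Set.EqOn u (fun t ↦ C * φ t ^ (2 - (n : ℝ))) I) :
    radialLaplacian n φ u s =
      -(((n : ℝ) - 1) * (n - 2)) * (φ a ^ ((n : ℝ) - 1) * φ s ^ (-(n : ℝ))) ^ 2 * u s := by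
  have hφa := hφ.pos a ha
  have hφs := hφ.pos s hs
  have deriv_deriv_u : deriv (deriv u) s =
      C * ((2 - n) * ((n : ℝ) - 1) * φ s ^ (-(n : ℝ))) := by
    rw [(hu.eventuallyEq_of_mem (hI.mem_nhds hs)).deriv.deriv_eq, deriv_const_mul_field',
      deriv_const_mul_field, hφ.deriv_deriv_rpow hI hs]
    ring_nf
  have u_eq : u s = C * φ s ^ (2 - (n : ℝ)) := hu hs
  rw [hφ.radialLaplacian_eq hI hI' ha ha' hs, deriv_deriv_u, u_eq, mul_comm 2,
    Real.rpow_mul (by positivity), Real.rpow_two, Real.div_rpow hφa.le hφs.le,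
    Real.rpow_sub hφs, Real.rpow_sub hφs, Real.rpow_neg hφs.le, Real.rpow_one, Real.rpow_two]
  field_simp
  ring

theorem radialLaplacian_const_mul_rpow_neg_rpow {n : ℕ} {A : ℝ}
    (hφ : IsCatenoidProfile ((n : ℝ) - 1) I φ) (hI : IsOpen I) (hI' : IsPreconnected I)
    (ha : a ∈ I) (ha' : deriv φ a = 0) (hs : s ∈ I) (hn : n ≠ 0) (hA : 0 ≤ A) :
    radialLaplacian n φ (fun t ↦ (A * φ t ^ (-(n : ℝ))) ^ (((n : ℝ) - 2) / n)) s =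
      -(((n : ℝ) - 1) * (n - 2)) * (φ a ^ ((n : ℝ) - 1) * φ s ^ (-(n : ℝ))) ^ 2 *
        (A * φ s ^ (-(n : ℝ))) ^ (((n : ℝ) - 2) / n) := by
  refine hφ.radialLaplacian_const_mul_rpow (C := A ^ (((n : ℝ) - 2) / n)) hI hI' ha ha' hs ?_
  intro t ht
  have hφt := hφ.pos t ht
  have exponent_eq : -(n : ℝ) * ((n - 2) / n) = 2 - n := by
    field_simp
    ring
  simp only [Real.mul_rpow hA (Real.rpow_nonneg hφt.le _), ← Real.rpow_mul hφt.le, exponent_eq]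

end IsCatenoidProfile

/-- **(2/n)-stability of the catenoid via a positive Jacobi-type solution.**
Let `φ` be a smooth positive solution of the catenoid ODE on an open interval `I`
containing `0` with `φ 0 = φ₀ > 0`, `φ' 0 = 0`, set
`ψ = (n(n-1))^(1/2)·φ₀^(n-1)·φ^(-n)` (the norm `|A|` of the second fundamental form),
and let `u = ψ^((n-2)/n)`.  Then `u > 0` on `I` and `Δu + ((n-2)/n)·ψ²·u = 0` on `I`. -/
theorem catenoid_two_over_n_stable
    (n : ℕ) (hn : 3 ≤ n) (φ₀ : ℝ) (hφ₀ : 0 < φ₀)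
    (I : Set ℝ) (hIopen : IsOpen I) (hIconv : Convex ℝ I) (h0I : (0 : ℝ) ∈ I)
    (φ : ℝ → ℝ)
    (hsmooth : ContDiffOn ℝ (⊤ : ℕ∞) φ I)
    (hpos : ∀ s ∈ I, 0 < φ s)
    (hode : ∀ s ∈ I, deriv (deriv φ) s = ((n : ℝ) - 1) * (1 + (deriv φ s) ^ 2) / φ s)
    (hinit : φ 0 = φ₀) (hinit' : deriv φ 0 = 0)
    (ψ : ℝ → ℝ)
    (hψ : ψ = fun s => Real.sqrt ((n : ℝ) * ((n : ℝ) - 1)) * φ₀ ^ (n - 1) * (φ s) ^ (-(n : ℤ)))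
    (u : ℝ → ℝ)
    (hu : u = fun s => (ψ s) ^ (((n : ℝ) - 2) / (n : ℝ))) :
    ∀ s ∈ I,
      0 < u s ∧
      radialLaplacian n φ u s + (((n : ℝ) - 2) / (n : ℝ)) * (ψ s) ^ 2 * u s = 0 := by
  have hn1 : (0 : ℝ) < n - 1 := sub_pos.2 (Nat.one_lt_cast.2 (by lia))
  have hφ : IsCatenoidProfile ((n : ℝ) - 1) I φ :=
    .of_contDiffOn hIopen (contDiffOn_infty.1 hsmooth 2) hpos hode
  set A : ℝ := √(n * (n - 1)) * φ₀ ^ (n - 1)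
  have hA : 0 < A := by positivity
  have hA_sq : A ^ 2 = n * (n - 1) * (φ 0 ^ ((n : ℝ) - 1)) ^ 2 := by
    rw [mul_pow, Real.sq_sqrt (by positivity), hinit, ← Nat.cast_pred (by lia), Real.rpow_natCast]
  have hψ_rpow : ψ = fun s ↦ A * φ s ^ (-(n : ℝ)) := by
    simp only [hψ, ← Real.rpow_intCast, Int.cast_neg, Int.cast_natCast, A]
  intro s hs
  have hφs := hpos s hs
  have hψ_sq : ψ s ^ 2 = n * (n - 1) * (φ 0 ^ ((n : ℝ) - 1) * φ s ^ (-(n : ℝ))) ^ 2 := by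
    rw [hψ_rpow, mul_pow, hA_sq, mul_pow, mul_assoc]
  rw [hψ_sq, hu, hψ_rpow, hφ.radialLaplacian_const_mul_rpow_neg_rpow hIopen
    hIconv.isPreconnected h0I hinit' hs (by lia) hA.le]
  refine ⟨by positivity, ?_⟩
  field_simp
  ring
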